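/- Let C be a conjugation on the complex Hilbert space K, and let S be a closed densely defined normal operator in K with C(D(S)) = D(S) and C(S(Cξ)) = Sξ for all ξ ∈ D(S); let E be the spectral measure of S on 𝔖 = σ(S). Then for every (not necessarily bounded) Borel E-stem function f : 𝔖 → ℂ: C(D_f) = D_f; Ψ(f)(Cξ) = C(Ψ(f)ξ) for all ξ ∈ D_f; consequently Ψ(f) maps D_f ∩ H into H; and ‖Ψ(f)x‖² = ∫_𝔖 |f|² dμ_{x,x} for all x ∈ D_f ∩ H. -/

import Mathlib

open MeasureTheory
open scoped InnerProductSpace ComplexConjugate ENNReal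

/-- A conjugation on a complex Hilbert space `K`. -/
structure IsConjugation {K : Type*} [NormedAddCommGroup K] [InnerProductSpace ℂ K]
    (C : K → K) : Prop where
  map_add : ∀ x y : K, C (x + y) = C x + C y
  map_smul : ∀ (a : ℂ) (x : K), C (a • x) = (conj a) • C x
  invol : ∀ x : K, C (C x) = x
  inner_map : ∀ x y : K, ⟪C x, C y⟫_ℂ = conj ⟪x, y⟫_ℂ

/-- A (projection-valued) spectral measure on the Borel subsets of the set `𝔖 ⊆ ℂ`,
together with the family `μ` of its associated diagonal scalar measures
`μ ξ (A) = ⟨E(A)ξ, ξ⟩`. -/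
structure IsSpectralMeasure {K : Type*} [NormedAddCommGroup K] [InnerProductSpace ℂ K]
    [CompleteSpace K] (𝔖 : Set ℂ) (E : Set ℂ → K →L[ℂ] K) (μ : K → Measure ℂ) : Prop where
  selfAdjoint : ∀ A : Set ℂ, MeasurableSet A → A ⊆ 𝔖 → IsSelfAdjoint (E A)
  empty : E ∅ = 0
  univ : E 𝔖 = 1
  inter : ∀ A B : Set ℂ, MeasurableSet A → MeasurableSet B → A ⊆ 𝔖 → B ⊆ 𝔖 →
    E (A ∩ B) = E A ∘L E B
  countablyAdditive : ∀ (ξ η : K) (A : ℕ → Set ℂ), (∀ n, MeasurableSet (A n)) →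
    (∀ n, A n ⊆ 𝔖) → Pairwise (Function.onFun Disjoint A) →
    HasSum (fun n => ⟪η, E (A n) ξ⟫_ℂ) ⟪η, E (⋃ n, A n) ξ⟫_ℂ
  measure_eq : ∀ (ξ : K) (A : Set ℂ), MeasurableSet A → A ⊆ 𝔖 →
    μ ξ A = ENNReal.ofReal (⟪ξ, E A ξ⟫_ℂ).re
  measure_compl : ∀ ξ : K, μ ξ 𝔖ᶜ = 0

/-- The polarized integral `∫_𝔖 f dμ_{ξ,η}` of `f` against the complex measure
`μ_{ξ,η}(A) = ⟨E(A)ξ, η⟩`, expressed through the four diagonal (positive) measures. -/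
noncomputable def specInt {K : Type*} [NormedAddCommGroup K] [InnerProductSpace ℂ K]
    (μ : K → Measure ℂ) (f : ℂ → ℂ) (ξ η : K) : ℂ :=
  (4 : ℂ)⁻¹ * (((∫ z, f z ∂(μ (ξ + η))) - ∫ z, f z ∂(μ (ξ - η)))
    + Complex.I * ((∫ z, f z ∂(μ (ξ + Complex.I • η))) - ∫ z, f z ∂(μ (ξ - Complex.I • η))))

/-- The image `A^c = {conj z : z ∈ A}` of a subset of `ℂ` under complex conjugation. -/
def conjSet (A : Set ℂ) : Set ℂ := (fun z => conj z) '' A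

/-- The point `z₀` lies in the resolvent set of the (possibly unbounded) operator `S`:
`z₀ − S : D(S) → K` is bijective with bounded everywhere-defined inverse. -/
def HasBoundedResolventAt {K : Type*} [NormedAddCommGroup K] [InnerProductSpace ℂ K]
    (S : K →ₗ.[ℂ] K) (z₀ : ℂ) : Prop :=
  ∃ R : K →L[ℂ] K, (∀ ξ : K, ∃ h : R ξ ∈ S.domain, z₀ • R ξ - S ⟨R ξ, h⟩ = ξ) ∧
    (∀ ξ : S.domain, R (z₀ • (ξ : K) - S ξ) = ξ)

/-- The spectrum of a (possibly unbounded) operator `S` in `K`. -/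
def pmapSpectrum {K : Type*} [NormedAddCommGroup K] [InnerProductSpace ℂ K]
    (S : K →ₗ.[ℂ] K) : Set ℂ :=
  {z₀ | ¬ HasBoundedResolventAt S z₀}

/-- A closed densely defined normal operator: `D(S*) = D(S)` and `‖Sξ‖ = ‖S*ξ‖` on the
common domain (equivalently `SS* = S*S` with equality of domains). -/
def IsNormalPMap {K : Type*} [NormedAddCommGroup K] [InnerProductSpace ℂ K] [CompleteSpace K]
    (S : K →ₗ.[ℂ] K) : Prop :=
  Dense (S.domain : Set K) ∧ S.IsClosed ∧ S.adjoint.domain = S.domain ∧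
    ∀ (ξ : K) (h1 : ξ ∈ S.domain) (h2 : ξ ∈ S.adjoint.domain),
      ‖S ⟨ξ, h1⟩‖ = ‖S.adjoint ⟨ξ, h2⟩‖

/-- The natural domain `D_f = {ξ : ∫ |f|² dμ_{ξ,ξ} < ∞}` of the operator `Ψ(f)`. -/
def specDomain {K : Type*} [NormedAddCommGroup K] [InnerProductSpace ℂ K]
    (μ : K → MeasureTheory.Measure ℂ) (f : ℂ → ℂ) : Set K :=
  {ξ | ∫⁻ z, (‖f z‖₊ : ENNReal) ^ 2 ∂(μ ξ) < ⊤}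

/-!
If `E` is the spectral measure of `S`, then `A ↦ C E(conj A) C` is a spectral measure of
`C S C = S`. Spectral measures are unique: the range of `E` on the closed disc of radius `r` about
`w` is the largest set that `S - w` maps into itself with bound `r`, since iterating that bound
controls all moments of `|z - w|²` against `μ_{ξ,ξ}`. Hence `μ_{Cξ,Cξ}` is the image of `μ_{ξ,ξ}`
under complex conjugation, and for a stem function `f` both `D_f` and the weak identities defining
`Ψ(f)` are invariant under `C`. The norm formula is the `L²` isometry `g ↦ Ψ(g)ξ`, extended from
simple functions to `f` by approximation.
-/

open Filter Topology
open scoped NNReal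

theorem ae_le_of_lintegral_pow_le {α : Type*} [MeasurableSpace α] {ν : Measure α} {g : α → ℝ≥0∞}
    (hg : AEMeasurable g ν) {r M : ℝ≥0∞} (hM : M ≠ ⊤)
    (h : ∀ n : ℕ, ∫⁻ a, g a ^ n ∂ν ≤ r ^ n * M) : ∀ᵐ a ∂ν, g a ≤ r := by
  rw [ae_le_const_iff_forall_gt_measure_zero]
  intro b hrb
  obtain ⟨t, hrt, htb⟩ := exists_between hrb
  have ht0 : t ≠ 0 := (zero_le.trans_lt hrt).ne'
  have ht : t ≠ ⊤ := htb.ne_top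
  have chebyshev (n : ℕ) : ν {a | b ≤ g a} ≤ (r / t) ^ n * M := calc
    ν {a | b ≤ g a} ≤ ν {a | t ^ n ≤ g a ^ n} :=
      measure_mono fun a (ha : b ≤ g a) => pow_le_pow_left' (htb.le.trans ha) n
    _ ≤ (∫⁻ a, g a ^ n ∂ν) / t ^ n :=
      meas_ge_le_lintegral_div (hg.pow_const n) (pow_ne_zero n ht0) (ENNReal.pow_ne_top ht)
    _ ≤ r ^ n * M / t ^ n := by gcongr; exact h n
    _ = (r / t) ^ n * M := by
      simp only [div_eq_mul_inv, mul_pow, ENNReal.inv_pow]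
      ring
  have hlim : Tendsto (fun n : ℕ => (r / t) ^ n * M) atTop (𝓝 0) := by
    have hlt : r / t < 1 := ENNReal.div_lt_of_lt_mul (by rwa [one_mul])
    simpa only [zero_mul] using ENNReal.Tendsto.mul_const
      (ENNReal.tendsto_pow_atTop_nhds_zero_of_lt_one hlt) (Or.inr hM)
  exact le_zero_iff.mp (ge_of_tendsto' hlim chebyshev)

theorem borel_eq_generateFrom_closedBall (X : Type*) [PseudoMetricSpace X]
    [SecondCountableTopology X] :
    borel X =
      MeasurableSpace.generateFrom (Set.range fun p : X × ℝ≥0 => Metric.closedBall p.1 p.2) := by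
  refine le_antisymm (MeasurableSpace.generateFrom_le fun U (hU : IsOpen U) => ?_)
    (MeasurableSpace.generateFrom_le ?_)
  · have hball (x : X) : ∃ r : ℝ≥0, 0 < r ∧ (x ∈ U → Metric.closedBall x r ⊆ U) := by
      by_cases hx : x ∈ U
      · obtain ⟨ε, hε, hεU⟩ := Metric.nhds_basis_closedBall.mem_iff.mp (hU.mem_nhds hx)
        exact ⟨⟨ε, hε.le⟩, hε, fun _ => hεU⟩
      · exact ⟨1, one_pos, fun h => absurd h hx⟩
    choose r hr hrU using hball
    obtain ⟨t, htU, htc, hcover⟩ := TopologicalSpace.countable_cover_nhdsWithin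
      fun x (_ : x ∈ U) => mem_nhdsWithin_of_mem_nhds (Metric.closedBall_mem_nhds x (hr x))
    have hU_eq : U = ⋃ x ∈ t, Metric.closedBall x (r x) :=
      hcover.antisymm (Set.iUnion₂_subset fun x hx => hrU x (htU hx))
    rw [hU_eq]
    exact MeasurableSet.biUnion htc fun x _ =>
      MeasurableSpace.measurableSet_generateFrom ⟨(x, r x), rfl⟩
  · let _ := borel X
    have : BorelSpace X := ⟨rfl⟩
    rintro _ ⟨p, rfl⟩
    exact measurableSet_closedBall

theorem eLpNorm_two_pow_two {α F : Type*} [MeasurableSpace α] [NormedAddCommGroup F] (f : α → F)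
    (ν : Measure α) : eLpNorm f 2 ν ^ 2 = ∫⁻ a, ‖f a‖ₑ ^ 2 ∂ν := by
  simpa using eLpNorm_nnreal_pow_eq_lintegral (f := f) (μ := ν) (p := 2) two_ne_zero

theorem exists_simpleFunc_tendsto_eLpNorm_two {f : ℂ → ℂ} (hf : Measurable f) :
    ∃ g : ℕ → SimpleFunc ℂ ℂ, ∀ ν : Measure ℂ, MemLp f 2 ν →
      Tendsto (fun n => eLpNorm (⇑(g n) - f) 2 ν) atTop (𝓝 0) :=
  ⟨SimpleFunc.approxOn f hf (Set.range f ∪ {0}) 0 (by simp), fun _ hfν =>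
    SimpleFunc.tendsto_approxOn_range_Lp_eLpNorm (by simp) hf hfν.2⟩

theorem integral_map_conj {ν : Measure ℂ} {f : ℂ → ℂ} (hf : Measurable f)
    (hstem : ∀ᵐ z ∂ν, f (conj z) = conj (f z)) :
    ∫ z, f z ∂(ν.map conj) = conj (∫ z, f z ∂ν) := by
  rw [integral_map (by fun_prop) (by fun_prop), ← integral_conj]
  exact integral_congr_ae hstem

section SpectralIntegral

variable {K : Type*} [NormedAddCommGroup K] [InnerProductSpace ℂ K] {μ : K → Measure ℂ}
  {f : ℂ → ℂ}

theorem mem_specDomain_iff_memLp (hf : Measurable f) {x : K} :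
    x ∈ specDomain μ f ↔ MemLp f 2 (μ x) := by
  have hlt : eLpNorm f 2 (μ x) < ⊤ ↔ x ∈ specDomain μ f := by
    rw [eLpNorm_lt_top_iff_lintegral_rpow_enorm_lt_top two_ne_zero ENNReal.ofNat_ne_top]
    simp only [ENNReal.toReal_ofNat, ENNReal.rpow_ofNat]
    rfl
  exact ⟨fun hx => ⟨hf.aestronglyMeasurable, hlt.mpr hx⟩, fun hx => hlt.mp hx.2⟩

theorem specInt_eq_inner (T : K →ₗ[ℂ] K) (hT : ∀ v, ∫ z, f z ∂(μ v) = ⟪v, T v⟫_ℂ) (x y : K) :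
    specInt μ f x y = ⟪y, T x⟫_ℂ := by
  simp only [specInt, hT, map_add, map_sub, map_smul, inner_add_left, inner_add_right,
    inner_sub_left, inner_sub_right, inner_smul_left, inner_smul_right, Complex.conj_I]
  ring_nf
  simp only [Complex.I_sq]
  ring

/-- `HasSpectralIntegral μ f x y` is the relation `y = Ψ(f) x`: the vector `x` lies in `D_f` and
`y` satisfies the weak identities that characterize `Ψ(f) x`. -/
structure HasSpectralIntegral (μ : K → Measure ℂ) (f : ℂ → ℂ) (x y : K) : Prop where
  mem : x ∈ specDomain μ f
  inner_eq : ∀ η ∈ specDomain μ f, ⟪η, y⟫_ℂ = specInt μ f x η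

end SpectralIntegral

section Conjugation

variable {K : Type*} [NormedAddCommGroup K] [InnerProductSpace ℂ K] {C : K → K}

namespace IsConjugation

variable (hC : IsConjugation C)
include hC

theorem norm_map (x : K) : ‖C x‖ = ‖x‖ := by
  rw [norm_eq_sqrt_re_inner (𝕜 := ℂ), hC.inner_map, norm_eq_sqrt_re_inner (𝕜 := ℂ) x,
    RCLike.conj_re]

theorem map_sub (x y : K) : C (x - y) = C x - C y := by
  rw [eq_sub_iff_add_eq, ← hC.map_add, sub_add_cancel]

theorem inner_map_left (x y : K) : ⟪C x, y⟫_ℂ = ⟪C y, x⟫_ℂ := by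
  nth_rw 1 [← hC.invol y]
  rw [hC.inner_map, inner_conj_symm]

theorem inner_map_right (x y : K) : ⟪x, C y⟫_ℂ = ⟪y, C x⟫_ℂ := by
  rw [← inner_conj_symm, hC.inner_map_left, inner_conj_symm]

end IsConjugation

/-- A conjugation as an antilinear isometry. -/
def IsConjugation.toLinearIsometry (hC : IsConjugation C) : K →ₗᵢ⋆[ℂ] K where
  toFun := C
  map_add' := hC.map_add
  map_smul' := hC.map_smul
  norm_map' := hC.norm_map

/-- The family `A ↦ C E(conj A) C`, which is the spectral measure of `C S C` when `E` is that of
`S`. -/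
noncomputable def IsConjugation.conjProj (hC : IsConjugation C)
    (E : Set ℂ → K →L[ℂ] K) (A : Set ℂ) : K →L[ℂ] K :=
  hC.toLinearIsometry.toContinuousLinearMap ∘SL
    (E (starRingEnd ℂ ⁻¹' A) ∘SL hC.toLinearIsometry.toContinuousLinearMap)

theorem IsConjugation.conjProj_apply (hC : IsConjugation C) (E : Set ℂ → K →L[ℂ] K)
    (A : Set ℂ) (x : K) :
    hC.conjProj E A x = C (E (starRingEnd ℂ ⁻¹' A) (C x)) := rfl

variable {μ ν : K → Measure ℂ} {f : ℂ → ℂ}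

theorem mem_specDomain_iff_of_eq_map_conj (hf : Measurable f) {x y : K}
    (hy : ν y = (μ x).map conj) (hstem : ∀ᵐ z ∂(μ x), f (conj z) = conj (f z)) :
    y ∈ specDomain ν f ↔ x ∈ specDomain μ f := by
  have heq : ∫⁻ z, ‖f z‖ₑ ^ 2 ∂(ν y) = ∫⁻ z, ‖f z‖ₑ ^ 2 ∂(μ x) := by
    rw [hy, lintegral_map (by fun_prop) (by fun_prop)]
    refine lintegral_congr_ae (hstem.mono fun z hz => ?_)
    simp only [hz, RCLike.enorm_conj]
  exact iff_of_eq (congrArg (· < ⊤) heq)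

namespace IsConjugation

variable (hC : IsConjugation C) (hf : Measurable f) (hν : ∀ x, ν (C x) = (μ x).map conj)
  (hstem : ∀ x, ∀ᵐ z ∂(μ x), f (conj z) = conj (f z))
include hC hf hν hstem

theorem specInt_map (x y : K) : specInt ν f (C x) (C y) = conj (specInt μ f x y) := by
  have hI : Complex.I • C y = -C (Complex.I • y) := by
    rw [hC.map_smul, Complex.conj_I, neg_smul, neg_neg]
  simp only [specInt, hI, sub_neg_eq_add, ← sub_eq_add_neg, ← hC.map_add, ← hC.map_sub, hν,
    integral_map_conj hf (hstem _), map_mul, _root_.map_add, _root_.map_sub, map_inv₀, map_ofNat,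
    Complex.conj_I]
  ring

theorem hasSpectralIntegral_map {x y : K} (hxy : HasSpectralIntegral μ f x y) :
    HasSpectralIntegral ν f (C x) (C y) where
  mem := (mem_specDomain_iff_of_eq_map_conj hf (hν x) (hstem x)).mpr hxy.mem
  inner_eq η hη := by
    obtain ⟨ζ, rfl⟩ : ∃ ζ, C ζ = η := ⟨C η, hC.invol η⟩
    have hζ := (mem_specDomain_iff_of_eq_map_conj hf (hν ζ) (hstem ζ)).mp hη
    rw [hC.inner_map, hxy.inner_eq ζ hζ, hC.specInt_map hf hν hstem]

end IsConjugation

end Conjugation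

section SpectralResolution

variable {K : Type*} [NormedAddCommGroup K] [InnerProductSpace ℂ K] [CompleteSpace K]
  {E : Set ℂ → K →L[ℂ] K} {μ : K → Measure ℂ} {f : ℂ → ℂ} {A B : Set ℂ}

namespace IsSpectralMeasure

theorem extend_univ {𝔖 : Set ℂ} (hE : IsSpectralMeasure 𝔖 E μ) (h𝔖 : MeasurableSet 𝔖) :
    IsSpectralMeasure Set.univ (fun A => E (A ∩ 𝔖)) μ where
  selfAdjoint A hA _ := hE.selfAdjoint _ (hA.inter h𝔖) Set.inter_subset_right
  empty := by rw [Set.empty_inter, hE.empty]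
  univ := by rw [Set.univ_inter, hE.univ]
  inter A B hA hB _ _ := by
    rw [Set.inter_inter_distrib_right]
    exact hE.inter _ _ (hA.inter h𝔖) (hB.inter h𝔖) Set.inter_subset_right Set.inter_subset_right
  countablyAdditive ξ η A hA _ hdisj := by
    rw [Set.iUnion_inter]
    exact hE.countablyAdditive ξ η _ (fun n => (hA n).inter h𝔖) (fun _ => Set.inter_subset_right)
      fun i j hij => (hdisj hij).mono Set.inter_subset_left Set.inter_subset_left
  measure_eq ξ A hA _ := by
    rw [← measure_inter_conull' (t := 𝔖)
      (measure_mono_null (Set.sdiff_subset_compl A 𝔖) (hE.measure_compl ξ))]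
    exact hE.measure_eq ξ _ (hA.inter h𝔖) Set.inter_subset_right
  measure_compl ξ := by rw [Set.compl_univ, measure_empty]

section

variable (hE : IsSpectralMeasure Set.univ E μ)
include hE

theorem inner_apply_right (hA : MeasurableSet A) (x y : K) : ⟪x, E A y⟫_ℂ = ⟪E A x, y⟫_ℂ :=
  ((hE.selfAdjoint A hA (Set.subset_univ A)).isSymmetric x y).symm

theorem apply_apply (hA : MeasurableSet A) (hB : MeasurableSet B) (x : K) :
    E A (E B x) = E (A ∩ B) x := by
  rw [hE.inter A B hA hB (Set.subset_univ A) (Set.subset_univ B)]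
  rfl

theorem inner_apply_self (hA : MeasurableSet A) (x : K) :
    ⟪x, E A x⟫_ℂ = ((‖E A x‖ ^ 2 : ℝ) : ℂ) := by
  nth_rw 1 [← Set.inter_self A]
  rw [← hE.apply_apply hA hA, hE.inner_apply_right hA, inner_self_eq_norm_sq_to_K]
  norm_cast

theorem measure_apply (hA : MeasurableSet A) (x : K) : μ x A = ‖E A x‖ₑ ^ 2 := by
  rw [hE.measure_eq x A hA (Set.subset_univ A), hE.inner_apply_self hA, Complex.ofReal_re,
    ENNReal.ofReal_pow (norm_nonneg _), ofReal_norm]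

theorem measure_univ_apply (x : K) : μ x Set.univ = ‖x‖ₑ ^ 2 := by
  rw [hE.measure_apply MeasurableSet.univ, hE.univ, one_apply_eq_self]

theorem isFiniteMeasure (x : K) : IsFiniteMeasure (μ x) where
  measure_univ_lt_top := by
    rw [hE.measure_univ_apply]
    exact ENNReal.pow_lt_top enorm_lt_top

theorem measureReal_apply (hA : MeasurableSet A) (x : K) :
    (((μ x).real A : ℝ) : ℂ) = ⟪x, E A x⟫_ℂ := by
  rw [hE.inner_apply_self hA, Measure.real, hE.measure_apply hA, ENNReal.toReal_pow, toReal_enorm]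

theorem union (hA : MeasurableSet A) (hB : MeasurableSet B) (hAB : Disjoint A B) :
    E (A ∪ B) = E A + E B := by
  refine ContinuousLinearMap.coe_injective <| (ext_inner_map _ _).mp fun x => ?_
  have := hE.isFiniteMeasure x
  have hreal : ((μ x).real (A ∪ B) : ℂ) = (μ x).real A + (μ x).real B := by
    rw [measureReal_union hAB hB, Complex.ofReal_add]
  rw [hE.measureReal_apply (hA.union hB), hE.measureReal_apply hA, hE.measureReal_apply hB,
    hE.inner_apply_right hA, hE.inner_apply_right hB, hE.inner_apply_right (hA.union hB),
    ← inner_add_left] at hreal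
  exact hreal

theorem measure_proj (hA : MeasurableSet A) (x : K) : μ (E A x) = (μ x).restrict A := by
  ext B hB
  rw [Measure.restrict_apply hB, hE.measure_apply hB, hE.measure_apply (hB.inter hA),
    hE.apply_apply hB hA]

theorem apply_eq_self_iff (hA : MeasurableSet A) (x : K) :
    E A x = x ↔ ∀ᵐ z ∂(μ x), z ∈ A := by
  have hx : E A x + E Aᶜ x = x := by
    rw [← add_apply, ← hE.union hA hA.compl disjoint_compl_right,
      Set.union_compl_self, hE.univ, one_apply_eq_self]
  calc
    E A x = x ↔ E Aᶜ x = 0 := by rw [← add_eq_left (a := E A x), hx, eq_comm]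
    _ ↔ μ x Aᶜ = 0 := by simp [hE.measure_apply hA.compl]
    _ ↔ ∀ᵐ z ∂(μ x), z ∈ A := Iff.rfl

theorem measure_add_le (x y : K) : μ (x + y) ≤ (2 : ℝ≥0∞) • (μ x + μ y) := by
  refine Measure.le_iff.mpr fun A hA => ?_
  have hpar : ‖E A (x + y)‖ ^ 2 ≤ 2 * (‖E A x‖ ^ 2 + ‖E A y‖ ^ 2) := by
    rw [map_add]
    nlinarith [parallelogram_law_with_norm ℂ (E A x) (E A y), sq_nonneg ‖E A x - E A y‖]
  simp only [Measure.smul_apply, Measure.add_apply, smul_eq_mul, hE.measure_apply hA,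
    ← ofReal_norm]
  rw [← ENNReal.ofReal_pow (norm_nonneg _), ← ENNReal.ofReal_pow (norm_nonneg _),
    ← ENNReal.ofReal_pow (norm_nonneg _), ← ENNReal.ofReal_add (sq_nonneg _) (sq_nonneg _),
    ← ENNReal.ofReal_ofNat 2, ← ENNReal.ofReal_mul zero_le_two]
  exact ENNReal.ofReal_le_ofReal hpar

theorem measure_smul (a : ℂ) (x : K) : μ (a • x) = (‖a‖ₑ ^ 2) • μ x := by
  ext A hA
  simp only [Measure.smul_apply, smul_eq_mul, hE.measure_apply hA, map_smul, enorm_smul, mul_pow]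

end

/-- The domain `D_f` of `Ψ(f)` as a subspace of `K`. -/
def specSubmodule (hE : IsSpectralMeasure Set.univ E μ) (f : ℂ → ℂ) : Submodule ℂ K where
  carrier := specDomain μ f
  zero_mem' := by
    have h0 : μ 0 = 0 := by rw [← Measure.measure_univ_eq_zero, hE.measure_univ_apply]; simp
    simp [specDomain, h0]
  add_mem' {x y} (hx : _ < _) (hy : _ < _) := by
    refine (lintegral_mono' (hE.measure_add_le x y) le_rfl).trans_lt ?_
    rw [lintegral_smul_measure, lintegral_add_measure]
    exact ENNReal.mul_lt_top ENNReal.ofNat_lt_top (ENNReal.add_lt_top.mpr ⟨hx, hy⟩)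
  smul_mem' a x (hx : _ < _) := by
    change ∫⁻ z, _ ∂(μ (a • x)) < ⊤
    rw [hE.measure_smul, lintegral_smul_measure]
    exact ENNReal.mul_lt_top (ENNReal.pow_lt_top enorm_lt_top) hx

variable (hE : IsSpectralMeasure Set.univ E μ)
include hE

theorem proj_mem_specDomain (hA : MeasurableSet A) {x : K} (hx : x ∈ specDomain μ f) :
    E A x ∈ specDomain μ f := by
  change ∫⁻ z, _ ∂(μ (E A x)) < ⊤
  rw [hE.measure_proj hA]
  exact (setLIntegral_le_lintegral _ _).trans_lt hx

theorem mem_specDomain_of_bound (hf : Measurable f) {x : K} {r : ℝ}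
    (hx : ∀ᵐ z ∂(μ x), ‖f z‖ ≤ r) : x ∈ specDomain μ f :=
  have := hE.isFiniteMeasure x
  (mem_specDomain_iff_memLp hf).mpr (.of_bound hf.aestronglyMeasurable r hx)

theorem integrable (hf : Measurable f) {x : K} (hx : x ∈ specDomain μ f) : Integrable f (μ x) :=
  have := hE.isFiniteMeasure x
  ((mem_specDomain_iff_memLp hf).mp hx).integrable one_le_two

theorem specDomain_dense (hf : Measurable f) : Dense (specDomain μ f) := by
  change Dense (hE.specSubmodule f : Set K)
  rw [Submodule.dense_iff_topologicalClosure_eq_top, Submodule.topologicalClosure_eq_top_iff,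
    Submodule.eq_bot_iff]
  intro y hy
  have hball (n : ℕ) : μ y {z | ‖f z‖ ≤ n} = 0 := by
    have hmeas : MeasurableSet {z | ‖f z‖ ≤ n} := measurableSet_le hf.norm measurable_const
    have hmem : E {z | ‖f z‖ ≤ n} y ∈ specDomain μ f := by
      refine hE.mem_specDomain_of_bound (r := n) hf ?_
      rw [hE.measure_proj hmeas]
      exact ae_restrict_mem hmeas
    have h0 := (Submodule.mem_orthogonal' _ y).mp hy _ hmem
    rw [hE.inner_apply_self hmeas] at h0
    rw [hE.measure_apply hmeas]
    simpa using h0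
  have hcover : (⋃ n : ℕ, {z | ‖f z‖ ≤ n}) = Set.univ :=
    Set.eq_univ_of_forall fun z => Set.mem_iUnion.mpr (exists_nat_ge ‖f z‖)
  have huniv := measure_iUnion_null hball
  rw [hcover, hE.measure_univ_apply] at huniv
  simpa using huniv

end IsSpectralMeasure

/-- The functional calculus `Ψ(g) = ∑ c, c • E (g = c)` of a simple function `g`. -/
noncomputable def simpleCalculus (E : Set ℂ → K →L[ℂ] K) (g : SimpleFunc ℂ ℂ) : K →L[ℂ] K :=
  ∑ c ∈ g.range, c • E (g ⁻¹' {c})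

namespace IsSpectralMeasure

variable (hE : IsSpectralMeasure Set.univ E μ)
include hE

theorem simpleCalculus_sub (g h : SimpleFunc ℂ ℂ) :
    simpleCalculus E (g - h) = simpleCalculus E g - simpleCalculus E h := by
  let T (A : Set ℂ) : ℂ →L[ℝ] K →L[ℂ] K := (ContinuousLinearMap.id ℝ ℂ).smulRight (E A)
  have hT : FinMeasAdditive (0 : Measure ℂ) T := fun A B hA hB _ _ hAB => by
    ext1 c
    simp only [T, hE.union hA hB hAB, ContinuousLinearMap.smulRight_apply, add_apply, smul_add]
  exact SimpleFunc.setToSimpleFunc_sub T hT (SimpleFunc.integrable_of_isFiniteMeasure g)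
    (SimpleFunc.integrable_of_isFiniteMeasure h)

theorem apply_simpleCalculus (hA : MeasurableSet A) (g : SimpleFunc ℂ ℂ) (x : K) :
    E A (simpleCalculus E g x) = simpleCalculus E g (E A x) := by
  simp only [simpleCalculus, sum_apply, smul_apply, map_sum, map_smul,
    hE.apply_apply hA (g.measurableSet_fiber _), hE.apply_apply (g.measurableSet_fiber _) hA,
    Set.inter_comm]

theorem apply_fiber_simpleCalculus (g : SimpleFunc ℂ ℂ) {c : ℂ} (hc : c ∈ g.range) (x : K) :
    E (g ⁻¹' {c}) (simpleCalculus E g x) = c • E (g ⁻¹' {c}) x := by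
  simp only [simpleCalculus, sum_apply, smul_apply, map_sum, map_smul,
    hE.apply_apply (g.measurableSet_fiber _) (g.measurableSet_fiber _)]
  rw [Finset.sum_eq_single_of_mem c hc, Set.inter_self]
  intro d _ hdc
  rw [← Set.preimage_inter, Set.singleton_inter_eq_empty.mpr (by simpa using hdc.symm),
    Set.preimage_empty, hE.empty, zero_apply, smul_zero]

theorem enorm_simpleCalculus (g : SimpleFunc ℂ ℂ) (x : K) :
    ‖simpleCalculus E g x‖ₑ = eLpNorm g 2 (μ x) := by
  refine (ENNReal.pow_right_strictMono two_ne_zero).injective ?_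
  calc ‖simpleCalculus E g x‖ₑ ^ 2
    _ = ∑ c ∈ g.range, μ (simpleCalculus E g x) (g ⁻¹' {c}) := by
      rw [g.sum_range_measure_preimage_singleton, hE.measure_univ_apply]
    _ = ∑ c ∈ g.range, ‖c‖ₑ ^ 2 * μ x (g ⁻¹' {c}) := by
      refine Finset.sum_congr rfl fun c hc => ?_
      rw [hE.measure_apply (g.measurableSet_fiber c), hE.measure_apply (g.measurableSet_fiber c),
        hE.apply_fiber_simpleCalculus g hc, enorm_smul, mul_pow]
    _ = ∫⁻ z, ‖g z‖ₑ ^ 2 ∂(μ x) := by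
      rw [← SimpleFunc.map_lintegral, ← SimpleFunc.lintegral_eq_lintegral]
      rfl
    _ = eLpNorm g 2 (μ x) ^ 2 := (eLpNorm_two_pow_two _ _).symm

theorem specInt_simpleFunc (g : SimpleFunc ℂ ℂ) (x y : K) :
    specInt μ g x y = ⟪y, simpleCalculus E g x⟫_ℂ := by
  refine specInt_eq_inner (simpleCalculus E g : K →ₗ[ℂ] K) (fun v => ?_) x y
  have := hE.isFiniteMeasure v
  rw [SimpleFunc.integral_eq_sum g (SimpleFunc.integrable_of_isFiniteMeasure g),
    ContinuousLinearMap.coe_coe, simpleCalculus, sum_apply, inner_sum]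
  refine Finset.sum_congr rfl fun c _ => ?_
  rw [smul_apply, inner_smul_right, ← hE.measureReal_apply (g.measurableSet_fiber c),
    Complex.real_smul, mul_comm]

theorem tendsto_specInt (hf : Measurable f) {g : ℕ → SimpleFunc ℂ ℂ}
    (hg : ∀ v ∈ specDomain μ f, Tendsto (fun n => eLpNorm (⇑(g n) - f) 2 (μ v)) atTop (𝓝 0))
    {x y : K} (hx : x ∈ specDomain μ f) (hy : y ∈ specDomain μ f) :
    Tendsto (fun n => specInt μ (g n) x y) atTop (𝓝 (specInt μ f x y)) := by
  have hint (v : K) (hv : v ∈ hE.specSubmodule f) :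
      Tendsto (fun n => ∫ z, g n z ∂(μ v)) atTop (𝓝 (∫ z, f z ∂(μ v))) := by
    have := hE.isFiniteMeasure v
    refine tendsto_integral_of_L1' f (hE.integrable hf hv).aestronglyMeasurable
      (.of_forall fun n => SimpleFunc.integrable_of_isFiniteMeasure _) ?_
    refine tendsto_of_tendsto_of_tendsto_of_le_of_le tendsto_const_nhds ?_ (fun _ => zero_le)
      fun n => eLpNorm_le_eLpNorm_mul_rpow_measure_univ one_le_two
        ((g n).measurable.sub hf).aestronglyMeasurable
    simpa only [zero_mul] using ENNReal.Tendsto.mul_const (hg v hv)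
      (Or.inr (ENNReal.rpow_ne_top_of_nonneg (by norm_num) (measure_ne_top _ _)))
  have hx : x ∈ hE.specSubmodule f := hx
  have hy : y ∈ hE.specSubmodule f := hy
  have hIy := (hE.specSubmodule f).smul_mem Complex.I hy
  exact (((hint _ (add_mem hx hy)).sub (hint _ (sub_mem hx hy))).add
    (((hint _ (add_mem hx hIy)).sub (hint _ (sub_mem hx hIy))).const_mul _)).const_mul _

theorem specDomain_sub_const (hf : Measurable f) (w : ℂ) :
    specDomain μ (fun z => f z - w) = specDomain μ f := by
  ext v
  have := hE.isFiniteMeasure v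
  rw [mem_specDomain_iff_memLp (hf.sub_const w), mem_specDomain_iff_memLp hf]
  refine ⟨fun h => ?_, fun h => h.sub (memLp_const w)⟩
  simpa only [Pi.add_def, sub_add_cancel] using h.add (memLp_const w)

theorem specInt_sub_const (hf : Measurable f) (w : ℂ) {x y : K} (hx : x ∈ specDomain μ f)
    (hy : y ∈ specDomain μ f) :
    specInt μ (fun z => f z - w) x y = specInt μ f x y - ⟪y, w • x⟫_ℂ := by
  have hsub (v : K) (hv : v ∈ hE.specSubmodule f) :
      ∫ z, (f z - w) ∂(μ v) = ∫ z, f z ∂(μ v) - ∫ _, w ∂(μ v) :=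
    have := hE.isFiniteMeasure v
    integral_sub (hE.integrable hf hv) (integrable_const w)
  have hconst : specInt μ (fun _ => w) x y = ⟪y, w • x⟫_ℂ :=
    specInt_eq_inner (w • LinearMap.id) (fun v => by
      rw [integral_const, Complex.real_smul, hE.measureReal_apply MeasurableSet.univ, hE.univ,
        LinearMap.smul_apply, LinearMap.id_apply, inner_smul_right, one_apply_eq_self, mul_comm])
      x y
  have hx : x ∈ hE.specSubmodule f := hx
  have hy : y ∈ hE.specSubmodule f := hy
  have hIy := (hE.specSubmodule f).smul_mem Complex.I hy
  rw [← hconst, specInt, hsub _ (add_mem hx hy), hsub _ (sub_mem hx hy), hsub _ (add_mem hx hIy),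
    hsub _ (sub_mem hx hIy), specInt, specInt]
  ring

end IsSpectralMeasure

namespace HasSpectralIntegral

variable {x y : K} (hxy : HasSpectralIntegral μ f x y) (hE : IsSpectralMeasure Set.univ E μ)
  (hf : Measurable f)
include hxy hE hf

theorem unique {y' : K} (hxy' : HasSpectralIntegral μ f x y') : y = y' :=
  (hE.specDomain_dense hf).eq_of_inner_right ℂ fun η hη => by
    rw [hxy.inner_eq η hη, hxy'.inner_eq η hη]

theorem tendsto_simpleCalculus {g : ℕ → SimpleFunc ℂ ℂ}
    (hg : ∀ v ∈ specDomain μ f, Tendsto (fun n => eLpNorm (⇑(g n) - f) 2 (μ v)) atTop (𝓝 0)) :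
    Tendsto (fun n => simpleCalculus E (g n) x) atTop (𝓝 y) := by
  have hcauchy : CauchySeq fun n => simpleCalculus E (g n) x := by
    have := hE.isFiniteMeasure x
    have hfLp := (mem_specDomain_iff_memLp hf).mp hxy.mem
    have hgLp (n : ℕ) := SimpleFunc.memLp_of_isFiniteMeasure (g n) 2 (μ x)
    have hedist (m n : ℕ) : edist (simpleCalculus E (g m) x) (simpleCalculus E (g n) x) =
        edist ((hgLp m).toLp (g m)) ((hgLp n).toLp (g n)) := by
      rw [Lp.edist_toLp_toLp, ← SimpleFunc.coe_sub, ← hE.enorm_simpleCalculus,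
        hE.simpleCalculus_sub, sub_apply, edist_eq_enorm_sub]
    have hlim := (Lp.tendsto_Lp_iff_tendsto_eLpNorm'' _ hgLp f hfLp).mpr (hg x hxy.mem)
    simpa only [EMetric.cauchySeq_iff, hedist] using hlim.cauchySeq
  obtain ⟨y', hy'⟩ := cauchySeq_tendsto_of_complete hcauchy
  suffices hy : HasSpectralIntegral μ f x y' by rwa [hxy.unique hE hf hy]
  refine ⟨hxy.mem, fun η hη => tendsto_nhds_unique (tendsto_const_nhds.inner hy') ?_⟩
  simpa only [hE.specInt_simpleFunc] using hE.tendsto_specInt hf hg hxy.mem hη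

theorem enorm_proj (hA : MeasurableSet A) : ‖E A y‖ₑ = eLpNorm f 2 (μ (E A x)) := by
  obtain ⟨g, hg⟩ := exists_simpleFunc_tendsto_eLpNorm_two hf
  have := hE.isFiniteMeasure (E A x)
  have hfLp := (mem_specDomain_iff_memLp hf).mp (hE.proj_mem_specDomain hA hxy.mem)
  have hgLp (n : ℕ) := SimpleFunc.memLp_of_isFiniteMeasure (g n) 2 (μ (E A x))
  have hlim := (Lp.tendsto_Lp_iff_tendsto_eLpNorm'' _ hgLp f hfLp).mpr (hg _ hfLp)
  have hproj : Tendsto (fun n => E A (simpleCalculus E (g n) x)) atTop (𝓝 (E A y)) :=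
    ((E A).continuous.tendsto y).comp <| hxy.tendsto_simpleCalculus hE hf fun v hv =>
      hg _ ((mem_specDomain_iff_memLp hf).mp hv)
  refine tendsto_nhds_unique hproj.enorm ?_
  simpa only [hE.apply_simpleCalculus hA, hE.enorm_simpleCalculus, Lp.enorm_toLp] using hlim.enorm

theorem measure_eq : μ y = (μ x).withDensity fun z => ‖f z‖ₑ ^ 2 := by
  ext A hA
  rw [hE.measure_apply hA, hxy.enorm_proj hE hf hA, eLpNorm_two_pow_two, hE.measure_proj hA,
    withDensity_apply _ hA]

theorem enorm_sq_eq : ‖y‖ₑ ^ 2 = ∫⁻ z, ‖f z‖ₑ ^ 2 ∂(μ x) := by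
  rw [← hE.measure_univ_apply, hxy.measure_eq hE hf, withDensity_apply _ MeasurableSet.univ,
    Measure.restrict_univ]

theorem norm_sq_eq : ‖y‖ ^ 2 = ∫ z, ‖f z‖ ^ 2 ∂(μ x) := by
  rw [integral_eq_lintegral_of_nonneg_ae (.of_forall fun z => sq_nonneg _) (by fun_prop)]
  simp only [ENNReal.ofReal_pow (norm_nonneg _), ofReal_norm]
  rw [← hxy.enorm_sq_eq hE hf, ENNReal.toReal_pow, toReal_enorm]

theorem sub_const (w : ℂ) : HasSpectralIntegral μ (fun z => f z - w) x (y - w • x) := by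
  have hdom := hE.specDomain_sub_const hf w
  refine ⟨hdom ▸ hxy.mem, fun η hη => ?_⟩
  rw [hdom] at hη
  rw [hE.specInt_sub_const hf w hxy.mem hη, inner_sub_right, hxy.inner_eq η hη]

end HasSpectralIntegral

/-- `(E, μ)` is a spectral resolution of `S`: a spectral measure on all of `ℂ` for which `S` is
the operator `Ψ(z)`, domain included. -/
structure IsSpectralResolution (S : K →ₗ.[ℂ] K) (E : Set ℂ → K →L[ℂ] K) (μ : K → Measure ℂ) :
    Prop extends IsSpectralMeasure Set.univ E μ where
  specDomain_subset : specDomain μ (fun z => z) ⊆ S.domain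
  hasSpectralIntegral : ∀ ξ : S.domain, HasSpectralIntegral μ (fun z => z) ξ (S ξ)

/-- The set `V` lies in the domain of `S` and is mapped into itself by `S - w`, which is bounded
by `r` there. For a normal `S` the largest such set is the range of the spectral projection of the
closed disc of radius `r` about `w`, so this notion recovers `E` from `S` alone. -/
def IsBoundedInvariant (S : K →ₗ.[ℂ] K) (w : ℂ) (r : ℝ≥0) (V : Set K) : Prop :=
  ∀ v ∈ V, ∃ hv : v ∈ S.domain, S ⟨v, hv⟩ - w • v ∈ V ∧ ‖S ⟨v, hv⟩ - w • v‖ₑ ≤ r * ‖v‖ₑ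

namespace IsSpectralResolution

variable {S : K →ₗ.[ℂ] K} (h : IsSpectralResolution S E μ)
include h

theorem hasSpectralIntegral_sub_smul (w : ℂ) (ξ : S.domain) :
    HasSpectralIntegral μ (fun z => z - w) ξ (S ξ - w • (ξ : K)) :=
  (h.hasSpectralIntegral ξ).sub_const h.toIsSpectralMeasure measurable_id' w

theorem measure_sub_smul (w : ℂ) (ξ : S.domain) :
    μ (S ξ - w • (ξ : K)) = (μ ξ).withDensity fun z => ‖z - w‖ₑ ^ 2 :=
  (h.hasSpectralIntegral_sub_smul w ξ).measure_eq h.toIsSpectralMeasure (by fun_prop)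

theorem isBoundedInvariant_range_proj (w : ℂ) (r : ℝ≥0) :
    IsBoundedInvariant S w r {v | E (Metric.closedBall w r) v = v} := by
  intro v hv
  have hae : ∀ᵐ z ∂(μ v), z ∈ Metric.closedBall w r :=
    (h.apply_eq_self_iff measurableSet_closedBall v).mp hv
  have hmem : v ∈ specDomain μ (fun z => z) := by
    rw [← h.specDomain_sub_const measurable_id' w]
    refine h.mem_specDomain_of_bound (r := r) (by fun_prop) (hae.mono fun z hz => ?_)
    exact mem_closedBall_iff_norm.mp hz
  refine ⟨h.specDomain_subset hmem, ?_, ?_⟩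
  · rw [Set.mem_ofPred_eq, h.apply_eq_self_iff measurableSet_closedBall, h.measure_sub_smul]
    exact (withDensity_absolutelyContinuous _ _).ae_le hae
  · refine (ENNReal.pow_right_strictMono two_ne_zero).le_iff_le.mp ?_
    calc _ = ∫⁻ z, ‖z - w‖ₑ ^ 2 ∂(μ v) :=
          (h.hasSpectralIntegral_sub_smul w _).enorm_sq_eq h.toIsSpectralMeasure (by fun_prop)
      _ ≤ ∫⁻ _, (r : ℝ≥0∞) ^ 2 ∂(μ v) := by
          refine lintegral_mono_ae (hae.mono fun z hz => ?_)
          gcongr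
          exact enorm_le_coe.mpr (mem_closedBall_iff_norm.mp hz)
      _ = (r * ‖v‖ₑ) ^ 2 := by rw [lintegral_const, h.measure_univ_apply, mul_pow]

theorem lintegral_pow_le {w : ℂ} {r : ℝ≥0} {V : Set K} (hV : IsBoundedInvariant S w r V)
    (n : ℕ) {v : K} (hv : v ∈ V) :
    ∫⁻ z, (‖z - w‖ₑ ^ 2) ^ n ∂(μ v) ≤ ((r : ℝ≥0∞) ^ 2) ^ n * ‖v‖ₑ ^ 2 := by
  induction n generalizing v with
  | zero => simp [h.measure_univ_apply]
  | succ n ih =>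
    obtain ⟨hdom, hmem, hle⟩ := hV v hv
    calc ∫⁻ z, (‖z - w‖ₑ ^ 2) ^ (n + 1) ∂(μ v)
      _ = ∫⁻ z, (‖z - w‖ₑ ^ 2) ^ n ∂(μ (S ⟨v, hdom⟩ - w • v)) := by
        rw [h.measure_sub_smul w ⟨v, hdom⟩,
          lintegral_withDensity_eq_lintegral_mul _ (by fun_prop) (by fun_prop)]
        simp only [Pi.mul_apply, pow_succ']
      _ ≤ ((r : ℝ≥0∞) ^ 2) ^ n * ‖S ⟨v, hdom⟩ - w • v‖ₑ ^ 2 := ih hmem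
      _ ≤ ((r : ℝ≥0∞) ^ 2) ^ n * (r * ‖v‖ₑ) ^ 2 := by gcongr
      _ = ((r : ℝ≥0∞) ^ 2) ^ (n + 1) * ‖v‖ₑ ^ 2 := by ring

theorem proj_eq_self {w : ℂ} {r : ℝ≥0} {V : Set K} (hV : IsBoundedInvariant S w r V) {v : K}
    (hv : v ∈ V) : E (Metric.closedBall w r) v = v := by
  rw [h.apply_eq_self_iff measurableSet_closedBall]
  filter_upwards [ae_le_of_lintegral_pow_le (by fun_prop) (by finiteness)
    fun n => h.lintegral_pow_le hV n hv] with z hz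
  exact mem_closedBall_iff_norm.mpr
    (enorm_le_coe.mp ((ENNReal.pow_right_strictMono two_ne_zero).le_iff_le.mp hz))

variable {E' : Set ℂ → K →L[ℂ] K} {μ' : K → Measure ℂ} (h' : IsSpectralResolution S E' μ')
include h'

theorem proj_proj_closedBall (w : ℂ) (r : ℝ≥0) (x : K) :
    E' (Metric.closedBall w r) (E (Metric.closedBall w r) x) = E (Metric.closedBall w r) x :=
  h'.proj_eq_self (h.isBoundedInvariant_range_proj w r) <| by
    rw [Set.mem_ofPred_eq, h.apply_apply measurableSet_closedBall measurableSet_closedBall,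
      Set.inter_self]

theorem proj_closedBall_unique (w : ℂ) (r : ℝ≥0) :
    E (Metric.closedBall w r) = E' (Metric.closedBall w r) := by
  ext x
  refine ext_inner_left ℂ fun y => ?_
  rw [← h.proj_proj_closedBall h', h'.inner_apply_right measurableSet_closedBall,
    h.inner_apply_right measurableSet_closedBall, h'.proj_proj_closedBall h,
    h'.inner_apply_right measurableSet_closedBall]

theorem measure_unique : μ = μ' := by
  funext x
  have := h.isFiniteMeasure x
  let agree : Set (Set ℂ) := {A | MeasurableSet A ∧ E A = E' A}
  have hgen : (inferInstance : MeasurableSpace ℂ) = .generateFrom agree := by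
    refine le_antisymm ?_ (MeasurableSpace.generateFrom_le fun A hA => hA.1)
    rw [BorelSpace.measurable_eq (α := ℂ), borel_eq_generateFrom_closedBall]
    refine MeasurableSpace.generateFrom_mono ?_
    rintro _ ⟨⟨w, r⟩, rfl⟩
    exact ⟨measurableSet_closedBall, h.proj_closedBall_unique h' w r⟩
  have hpi : IsPiSystem agree := fun A ⟨hA, hEA⟩ B ⟨hB, hEB⟩ _ => by
    refine ⟨hA.inter hB, ?_⟩
    ext1 y
    rw [← h.apply_apply hA hB, ← h'.apply_apply hA hB, hEA, hEB]
  refine ext_of_generate_finite agree hgen hpi (fun A ⟨hA, hEA⟩ => ?_) ?_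
  · rw [h.measure_apply hA, h'.measure_apply hA, hEA]
  · rw [h.measure_univ_apply, h'.measure_univ_apply]

end IsSpectralResolution

section ConjugateResolution

variable {C : K → K} (hC : IsConjugation C)
include hC

theorem IsSpectralMeasure.conjProj (hE : IsSpectralMeasure Set.univ E μ) :
    IsSpectralMeasure Set.univ (hC.conjProj E) (fun x => (μ (C x)).map conj) where
  selfAdjoint A hA _ := by
    have hA' : MeasurableSet (starRingEnd ℂ ⁻¹' A) := hA.preimage (by fun_prop)
    rw [ContinuousLinearMap.isSelfAdjoint_iff_isSymmetric]
    intro x y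
    simp only [ContinuousLinearMap.coe_coe, hC.conjProj_apply]
    rw [hC.inner_map_left, hC.inner_map_right, hE.inner_apply_right hA']
  empty := by
    ext x
    rw [hC.conjProj_apply, Set.preimage_empty, hE.empty]
    exact hC.toLinearIsometry.map_zero
  univ := by
    ext x
    rw [hC.conjProj_apply, Set.preimage_univ, hE.univ, one_apply_eq_self, hC.invol,
      one_apply_eq_self]
  inter A B hA hB _ _ := by
    ext x
    rw [ContinuousLinearMap.comp_apply, hC.conjProj_apply, hC.conjProj_apply, hC.conjProj_apply,
      hC.invol, hE.apply_apply (hA.preimage (by fun_prop)) (hB.preimage (by fun_prop)),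
      Set.preimage_inter]
  countablyAdditive ξ η A hA _ hdisj := by
    simp only [hC.conjProj_apply, hC.inner_map_right η, Set.preimage_iUnion,
      ← inner_conj_symm _ (C η), Complex.hasSum_conj']
    exact hE.countablyAdditive (C ξ) (C η) _ (fun n => (hA n).preimage (by fun_prop))
      (fun _ => Set.subset_univ _) fun i j hij => (hdisj hij).preimage _
  measure_eq ξ A hA _ := by
    rw [Measure.map_apply (by fun_prop) hA, hC.conjProj_apply, hC.inner_map_right,
      ← inner_conj_symm, Complex.conj_re]
    exact hE.measure_eq _ _ (hA.preimage (by fun_prop)) (Set.subset_univ _)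
  measure_compl ξ := by rw [Set.compl_univ, measure_empty]

namespace IsSpectralResolution

variable {S : K →ₗ.[ℂ] K} (h : IsSpectralResolution S E μ)
  (hdom : ∀ ξ ∈ S.domain, C ξ ∈ S.domain)
  (hCS : ∀ (ξ : K) (hξ : ξ ∈ S.domain) (hξ' : C ξ ∈ S.domain), C (S ⟨C ξ, hξ'⟩) = S ⟨ξ, hξ⟩)
include h hdom hCS

theorem conjProj : IsSpectralResolution S (hC.conjProj E) (fun x => (μ (C x)).map conj) where
  toIsSpectralMeasure := h.toIsSpectralMeasure.conjProj hC
  specDomain_subset x hx := by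
    have hCx := (mem_specDomain_iff_of_eq_map_conj (ν := fun x => (μ (C x)).map conj)
      measurable_id' (x := C x) (y := x) rfl (.of_forall fun _ => rfl)).mp hx
    rw [← hC.invol x]
    exact hdom _ (h.specDomain_subset hCx)
  hasSpectralIntegral ξ := by
    have hξ := hdom ξ ξ.2
    have hmap := hC.hasSpectralIntegral_map (ν := fun x => (μ (C x)).map conj) measurable_id'
      (fun x => by rw [hC.invol]) (fun _ => .of_forall fun _ => rfl)
      (h.hasSpectralIntegral ⟨C ξ, hξ⟩)
    rwa [hC.invol, hCS ξ ξ.2 hξ] at hmap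

theorem measure_map_conj (x : K) : μ (C x) = (μ x).map conj := by
  have hx := congrFun ((h.conjProj hC hdom hCS).measure_unique h) (C x)
  rwa [hC.invol, eq_comm] at hx

end IsSpectralResolution

end ConjugateResolution

theorem pmapSpectrum_isClosed (S : K →ₗ.[ℂ] K) : IsClosed (pmapSpectrum S) := by
  rw [← isOpen_compl_iff, isOpen_iff_mem_nhds]
  intro z₀ hz₀
  obtain ⟨R, hRdom, hRS⟩ : HasBoundedResolventAt S z₀ := not_not.mp hz₀
  have hunits : ∀ᶠ z in 𝓝 z₀, IsUnit (1 - (z₀ - z) • R) := by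
    have hcont : ContinuousAt (fun z => 1 - (z₀ - z) • R) z₀ := by fun_prop
    exact hcont.eventually (Units.isOpen.mem_nhds (by simp))
  filter_upwards [hunits] with z ⟨U, hU⟩
  have hU_apply (ξ : K) : (U : K →L[ℂ] K) ξ = ξ - (z₀ - z) • R ξ := by rw [hU]; rfl
  have hUV (ξ : K) : (U : K →L[ℂ] K) ((↑U⁻¹ : K →L[ℂ] K) ξ) = ξ :=
    DFunLike.congr_fun U.mul_inv ξ
  have hVU (ξ : K) : (↑U⁻¹ : K →L[ℂ] K) ((U : K →L[ℂ] K) ξ) = ξ :=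
    DFunLike.congr_fun U.inv_mul ξ
  refine not_not.mpr ⟨R ∘L ↑U⁻¹, fun ξ => ?_, fun ξ => ?_⟩
  · obtain ⟨hdom, hSR⟩ := hRdom ((↑U⁻¹ : K →L[ℂ] K) ξ)
    set η := (↑U⁻¹ : K →L[ℂ] K) ξ
    refine ⟨hdom, ?_⟩
    calc z • R η - S ⟨R η, hdom⟩
      _ = (z₀ • R η - S ⟨R η, hdom⟩) - (z₀ - z) • R η := by
        rw [sub_smul]
        abel
      _ = ξ := by rw [hSR, ← hU_apply, hUV]
  · have hfactor : z • (ξ : K) - S ξ = (U : K →L[ℂ] K) (z₀ • (ξ : K) - S ξ) := by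
      rw [hU_apply, hRS, sub_smul]
      abel
    rw [ContinuousLinearMap.comp_apply, hfactor, hVU, hRS]

end SpectralResolution

/-- Let `C` be a conjugation on `K` and `S` a closed densely defined normal
operator in `K` commuting with `C`; let `E` (with diagonal scalar measures `μ`) be the
spectral measure of `S` on `𝔖 = σ(S)`.  For every Borel `E`-stem function `f`, with
`D_f = {ξ : ∫|f|² dμ_{ξ,ξ} < ∞}` and `Ψ(f)` the associated operator:
`C(D_f) = D_f`; `Ψ(f)` commutes with `C` on `D_f`; hence `Ψ(f)` maps `D_f ∩ H` into `H`;
and `‖Ψ(f)x‖² = ∫_𝔖 |f|² dμ_{x,x}` for `x ∈ D_f ∩ H`. -/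
theorem unbounded_stem_calculus_conj_invariant
    {K : Type*} [NormedAddCommGroup K] [InnerProductSpace ℂ K] [CompleteSpace K]
    {C : K → K} (hC : IsConjugation C) (S : K →ₗ.[ℂ] K) (hS : IsNormalPMap S)
    (hCdom : ∀ ξ : K, ξ ∈ S.domain ↔ C ξ ∈ S.domain)
    (hCS : ∀ (ξ : K) (h : ξ ∈ S.domain) (h' : C ξ ∈ S.domain),
      C (S ⟨C ξ, h'⟩) = S ⟨ξ, h⟩)
    (E : Set ℂ → K →L[ℂ] K) (μ : K → Measure ℂ)
    (hE : IsSpectralMeasure (pmapSpectrum S) E μ)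
    (hdom : ∀ ξ : K, ξ ∈ S.domain ↔ ξ ∈ specDomain μ (fun z => z))
    (hSE : ∀ ξ η : S.domain, ⟪(η : K), S ξ⟫_ℂ = specInt μ (fun z => z) ξ η)
    (f : ℂ → ℂ) (hfmeas : Measurable f)
    (hfstem : ∃ N : Set ℂ, MeasurableSet N ∧ N ⊆ pmapSpectrum S ∧ E N = 0 ∧
      ∀ z ∈ pmapSpectrum S \ N, f (conj z) = conj (f z))
    (Ψf : K → K)
    (hΨf : ∀ ξ ∈ specDomain μ f, ∀ η ∈ specDomain μ f, ⟪η, Ψf ξ⟫_ℂ = specInt μ f ξ η) :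
    (C '' specDomain μ f = specDomain μ f) ∧
    (∀ ξ ∈ specDomain μ f, Ψf (C ξ) = C (Ψf ξ)) ∧
    (∀ ξ ∈ specDomain μ f, C ξ = ξ → C (Ψf ξ) = Ψf ξ) ∧
    (∀ x ∈ specDomain μ f, C x = x → ‖Ψf x‖ ^ 2 = ∫ z, ‖f z‖ ^ 2 ∂(μ x)) := by
  have hres : IsSpectralResolution S (fun A => E (A ∩ pmapSpectrum S)) μ :=
    { hE.extend_univ (pmapSpectrum_isClosed S).measurableSet with
      specDomain_subset := fun ξ => (hdom ξ).mpr
      hasSpectralIntegral := fun ξ =>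
        ⟨(hdom ξ).mp ξ.2, fun η hη => hSE ξ ⟨η, (hdom η).mpr hη⟩⟩ }
  have hμC : ∀ x, μ (C x) = (μ x).map conj :=
    hres.measure_map_conj hC (fun ξ => (hCdom ξ).mp) hCS
  have hstem (x : K) : ∀ᵐ z ∂(μ x), f (conj z) = conj (f z) := by
    obtain ⟨N, hN, hNS, hEN, hf⟩ := hfstem
    have hμN : μ x N = 0 := by simp [hE.measure_eq x N hN hNS, hEN]
    filter_upwards [measure_eq_zero_iff_ae_notMem.mp hμN,
      measure_eq_zero_iff_ae_notMem.mp (hE.measure_compl x)] with z hzN hzS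
    exact hf z ⟨not_not.mp hzS, hzN⟩
  have hΨ (ξ : K) (hξ : ξ ∈ specDomain μ f) : HasSpectralIntegral μ f ξ (Ψf ξ) := ⟨hξ, hΨf ξ hξ⟩
  have hCmem (x : K) : C x ∈ specDomain μ f ↔ x ∈ specDomain μ f :=
    mem_specDomain_iff_of_eq_map_conj hfmeas (hμC x) (hstem x)
  have hcomm (ξ : K) (hξ : ξ ∈ specDomain μ f) : Ψf (C ξ) = C (Ψf ξ) :=
    (hΨ _ ((hCmem ξ).mpr hξ)).unique hres.toIsSpectralMeasure hfmeas
      (hC.hasSpectralIntegral_map hfmeas hμC hstem (hΨ ξ hξ))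
  refine ⟨?_, hcomm, fun ξ hξ hCξ => by rw [← hcomm ξ hξ, hCξ],
    fun x hx _ => (hΨ x hx).norm_sq_eq hres.toIsSpectralMeasure hfmeas⟩
  rw [Function.Involutive.image_eq_preimage_symm hC.invol]
  exact Set.ext hCmem
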